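/- With the notation and hypotheses of the context (including the Grothendieck–Riemann–Roch relation g_{I,λ} = (∏_j J(0,1,D_{i_j}))·h_{I,λ} and the twist relation c_{(η_1,…,η_n)}·exp(D) = c, and the grading assumptions), the degree-0 component of chPar equals c_0 (i.e. ch_0^{Par}(E) = rank(E)·[X]) and the degree-1 component of chPar equals c_1 − Σ_{i=1}^{n} Σ_{λ ∈ Σ'_i} α_i(λ) · r_{i,λ} · D_i (i.e. ch_1^{Par}(E) = ch_1^{Vb}(E) − Σ_i Σ_λ α_i(λ)·rank(Gr^i_λ)·[D_i]). -/

import Mathlib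

open scoped Classical

noncomputable section

variable {A : Type*} [CommRing A] [Algebra ℝ A]

/-- `exp x = Σ_{k ≥ 0} x^k/k!` for a nilpotent element `x`, as a finite sum (the terms with
`k ≥ nilpotencyClass x` vanish). -/
def nexp (x : A) : A :=
  ∑ m ∈ Finset.range (nilpotencyClass x), ((m.factorial : ℝ))⁻¹ • x ^ m

/-- `J(a,b,x) = Σ_{k ≥ 0} (-1)^k ((b^{k+1} - a^{k+1})/(k+1)!) x^k`, the formal value of
`∫_a^b exp (-ρ x) dρ` for a nilpotent element `x` (a finite sum). -/
def Jf (a b : ℝ) (x : A) : A :=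
  ∑ m ∈ Finset.range (nilpotencyClass x),
    ((-1 : ℝ) ^ m * ((b ^ (m + 1) - a ^ (m + 1)) / (m + 1).factorial)) • x ^ m

variable {n : ℕ} {Sig : Fin n → Type*} [∀ i, Fintype (Sig i)] [∀ i, LinearOrder (Sig i)]

/-- `c_σ = c + Σ_{q=1}^n (-1)^q Σ_{I = {i_1<⋯<i_q}} Σ_{λ : σ_{i_j} < λ_{i_j} ∀ j} g_{I,λ}`,
the Chern character of the component sheaf `E_σ` of a locally abelian parabolic bundle,
computed via the Koszul-style resolution.  Here `λ` runs over multi-indices of covers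
(risers) `λ_i` of `Σ_i` for `i ∈ I` with `σ_i ≤ m_-(λ_i)`. -/
def cSigma (c : A) (g : ∀ I : Finset (Fin n), ((i : I) → Sig i.1 × Sig i.1) → A)
    (σ : ∀ i, Sig i) : A :=
  c + ∑ I ∈ Finset.univ.filter (fun I : Finset (Fin n) => I.Nonempty),
        (-1 : A) ^ I.card *
          ∑ lam ∈ Finset.univ.filter
              (fun lam : (i : I) → Sig i.1 × Sig i.1 =>
                ∀ i : I, (lam i).1 ⋖ (lam i).2 ∧ σ i.1 ≤ (lam i).1),
            g I lam

/-- The parabolic Chern character, given by the Iyer–Simpson integral formula evaluated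
formally: `chPar = (∏_i J(0,1,D_i))⁻¹ Σ_{σ} c_σ ∏_i J(α_-(σ_i), α_+(σ_i), D_i)`. -/
def chPar (D : Fin n → A) (αm αp : ∀ i, Sig i → ℝ) (c : A)
    (g : ∀ I : Finset (Fin n), ((i : I) → Sig i.1 × Sig i.1) → A) : A :=
  Ring.inverse (∏ i, Jf 0 1 (D i)) *
    ∑ σ : ∀ i, Sig i, cSigma c g σ * ∏ i, Jf (αm i (σ i)) (αp i (σ i)) (D i)

/-- The multi-index of covers on the singleton `{i}` determined by one cover `p` of `Σ_i`. -/
def lamOfSingle {n : ℕ} {Sig : Fin n → Type*} (i : Fin n) (p : Sig i × Sig i) :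
    (j : ({i} : Finset (Fin n))) → Sig j.1 × Sig j.1 :=
  fun j => (Finset.mem_singleton.mp j.2).symm ▸ p

/-- The multi-index of covers on the pair `{i₁, i₂}` determined by covers `p₁` of `Σ_{i₁}`
and `p₂` of `Σ_{i₂}`. -/
def lamOfPair {n : ℕ} {Sig : Fin n → Type*} (i₁ i₂ : Fin n)
    (p₁ : Sig i₁ × Sig i₁) (p₂ : Sig i₂ × Sig i₂) :
    (j : ({i₁, i₂} : Finset (Fin n))) → Sig j.1 × Sig j.1 :=
  fun j =>
    if h : j.1 = i₁ then h.symm ▸ p₁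
    else
      (by
        have hj := j.2
        simp only [Finset.mem_insert, Finset.mem_singleton] at hj
        exact ((hj.resolve_left h).symm ▸ p₂ : Sig j.1 × Sig j.1))

/-- The multi-index of covers on the triple `{i₁, i₂, i₃}` determined by covers `p₁, p₂, p₃`
of `Σ_{i₁}, Σ_{i₂}, Σ_{i₃}`. -/
def lamOfTriple {n : ℕ} {Sig : Fin n → Type*} (i₁ i₂ i₃ : Fin n)
    (p₁ : Sig i₁ × Sig i₁) (p₂ : Sig i₂ × Sig i₂) (p₃ : Sig i₃ × Sig i₃) :
    (j : ({i₁, i₂, i₃} : Finset (Fin n))) → Sig j.1 × Sig j.1 :=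
  fun j =>
    if h1 : j.1 = i₁ then h1.symm ▸ p₁
    else if h2 : j.1 = i₂ then h2.symm ▸ p₂
    else
      (by
        have hj := j.2
        simp only [Finset.mem_insert, Finset.mem_singleton] at hj
        exact (((hj.resolve_left h1).resolve_left h2).symm ▸ p₃ : Sig j.1 × Sig j.1))

/-!
Everything happens modulo degree two, where products of two elements of positive degree vanish.
Summing `J(α_-, α_+, D_i)` over an initial segment of `Σ_i` telescopes, so the sum defining `chPar`
has the exact closed form `c ∏ J(-1, 0, D_i) + Σ_I (-1)^|I| Σ_λ g_{I,λ} ∏ J(-1, a_i, D_i)`, where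
`a_i` is `α_i(λ_i)` for `i ∈ I` and `0` otherwise. To first order only singletons `I = {i}`
contribute and `J(-1, α, D) h` becomes `(α + 1) h`, giving
`c (1 + ΣD_i) - Σ_i Σ_λ (α_i(λ) + 1) h_{i,λ}` after division by `∏ J(0, 1, D_i)`. To the same order
the twist relation reads `c ΣD_i = Σ_i Σ_λ h_{i,λ}`, which cancels the unweighted terms.
-/

section SquareZero

variable {B : Type*} [CommRing B]

theorem mul_eq_zero_of_mem_of_sq_eq_bot {N : Ideal B} (hN : N ^ 2 = ⊥) {x y : B} (hx : x ∈ N)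
    (hy : y ∈ N) : x * y = 0 := by
  rw [← Ideal.mem_bot, ← hN, sq]
  exact Ideal.mul_mem_mul hx hy

theorem prod_one_add_of_sq_eq_bot {ι : Type*} {N : Ideal B} (hN : N ^ 2 = ⊥) {e : ι → B}
    (he : ∀ i, e i ∈ N) (s : Finset ι) : ∏ i ∈ s, (1 + e i) = 1 + ∑ i ∈ s, e i := by
  induction s using Finset.induction_on with
  | empty => simp
  | insert a s ha ih =>
    have hcross : e a * ∑ i ∈ s, e i = 0 :=
      mul_eq_zero_of_mem_of_sq_eq_bot hN (he a) (N.sum_mem fun i _ => he i)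
    rw [Finset.prod_insert ha, Finset.sum_insert ha, ih]
    linear_combination hcross

theorem mul_prod_eq_prod_smul {ι R : Type*} [CommSemiring R] [Algebra R B] {y : B} {f : ι → B}
    {a : ι → R} (h : ∀ i, y * f i = a i • y) (s : Finset ι) :
    y * ∏ i ∈ s, f i = (∏ i ∈ s, a i) • y := by
  induction s using Finset.induction_on with
  | empty => simp
  | insert k s hk ih =>
    rw [Finset.prod_insert hk, Finset.prod_insert hk, ← mul_assoc, h, smul_mul_assoc, ih, smul_smul]

end SquareZero

section NilpotentSeries

variable {R B : Type*} [CommSemiring R] [CommRing B] [Algebra R B] {x : B}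

theorem sum_range_nilpotencyClass_smul_pow (hx : IsNilpotent x) {N : ℕ}
    (hN : nilpotencyClass x ≤ N) (f : ℕ → R) :
    ∑ m ∈ Finset.range (nilpotencyClass x), f m • x ^ m = ∑ m ∈ Finset.range N, f m • x ^ m := by
  refine Finset.sum_subset (Finset.range_subset_range.mpr hN) fun m _ hm => ?_
  rw [Finset.mem_range, not_lt] at hm
  rw [pow_eq_zero_of_le hm (pow_nilpotencyClass hx), smul_zero]

theorem isUnit_sum_range_nilpotencyClass_smul_pow (hx : IsNilpotent x) {f : ℕ → R}
    (hf : IsUnit (f 0)) :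
    IsUnit (∑ m ∈ Finset.range (nilpotencyClass x), f m • x ^ m) := by
  have htail : IsNilpotent (∑ m ∈ Finset.range (nilpotencyClass x), f (m + 1) • x ^ (m + 1)) :=
    isNilpotent_sum fun m _ => (hx.pow_succ m).smul _
  rw [sum_range_nilpotencyClass_smul_pow hx (Nat.le_succ _), Finset.sum_range_succ', pow_zero,
    ← Algebra.algebraMap_eq_smul_one]
  exact htail.isUnit_add_right_of_commute (hf.map (algebraMap R B)) (Commute.all _ _)

theorem map_sum_range_nilpotencyClass_smul_pow {C : Type*} [Semiring C] [Algebra R C]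
    (φ : B →ₐ[R] C) (hx : IsNilpotent x) (hφx : φ x ^ 2 = 0) (f : ℕ → R) :
    φ (∑ m ∈ Finset.range (nilpotencyClass x), f m • x ^ m) = f 0 • (1 : C) + f 1 • φ x := by
  rw [sum_range_nilpotencyClass_smul_pow hx (Nat.le_add_left _ 2), map_sum,
    Finset.sum_range_add, Finset.sum_eq_zero (s := Finset.range (nilpotencyClass x)) fun m _ => ?_]
  · simp [Finset.sum_range_succ]
  · rw [map_smul, map_pow, pow_add, hφx, zero_mul, smul_zero]

end NilpotentSeries

section FormalIntegral

variable {B : Type*} [CommRing B] [Algebra ℝ B] {x : A}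

theorem Jf_eq_sub (a b : ℝ) (x : A) : Jf a b x = Jf 0 b x - Jf 0 a x := by
  simp only [Jf, ← Finset.sum_sub_distrib, ← sub_smul]
  refine Finset.sum_congr rfl fun m _ => ?_
  congr 1
  rw [zero_pow m.succ_ne_zero]
  ring

theorem isUnit_Jf {a b : ℝ} (hab : a ≠ b) (hx : IsNilpotent x) : IsUnit (Jf a b x) :=
  isUnit_sum_range_nilpotencyClass_smul_pow hx <| by simpa [sub_eq_zero] using hab.symm

theorem map_Jf (φ : A →ₐ[ℝ] B) (hx : IsNilpotent x) (hφx : φ x ^ 2 = 0) (a b : ℝ) :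
    φ (Jf a b x) = (b - a) • (1 : B) - ((b ^ 2 - a ^ 2) / 2) • φ x := by
  rw [Jf, map_sum_range_nilpotencyClass_smul_pow φ hx hφx, sub_eq_add_neg _ (_ • φ x), ← neg_smul]
  norm_num

theorem map_nexp (φ : A →ₐ[ℝ] B) (hx : IsNilpotent x) (hφx : φ x ^ 2 = 0) :
    φ (nexp x) = 1 + φ x := by
  rw [nexp, map_sum_range_nilpotencyClass_smul_pow φ hx hφx]
  simp

theorem mul_map_Jf {N : Ideal B} (hN : N ^ 2 = ⊥) (φ : A →ₐ[ℝ] B) (hx : IsNilpotent x)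
    (hφx : φ x ∈ N) (a b : ℝ) {y : B} (hy : y ∈ N) : y * φ (Jf a b x) = (b - a) • y := by
  have hsq : φ x ^ 2 = 0 := by rw [sq, mul_eq_zero_of_mem_of_sq_eq_bot hN hφx hφx]
  rw [map_Jf φ hx hsq, mul_sub, mul_smul_comm, mul_smul_comm, mul_one,
    mul_eq_zero_of_mem_of_sq_eq_bot hN hy hφx, smul_zero, sub_zero]

theorem map_prod_Jf_of_sub_eq_one {ι : Type*} {N : Ideal B} (hN : N ^ 2 = ⊥) (φ : A →ₐ[ℝ] B)
    {x : ι → A} (hx : ∀ i, IsNilpotent (x i)) (hφx : ∀ i, φ (x i) ∈ N) {a b : ℝ}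
    (hab : b - a = 1) (s : Finset ι) :
    φ (∏ i ∈ s, Jf a b (x i)) = 1 - ((a + b) / 2) • ∑ i ∈ s, φ (x i) := by
  have hfactor (i : ι) : φ (Jf a b (x i)) = 1 + -((a + b) / 2) • φ (x i) := by
    have hsq : φ (x i) ^ 2 = 0 := by
      rw [sq, mul_eq_zero_of_mem_of_sq_eq_bot hN (hφx i) (hφx i)]
    rw [map_Jf φ (hx i) hsq, hab, one_smul, neg_smul, ← sub_eq_add_neg,
      show b ^ 2 - a ^ 2 = a + b by linear_combination (a + b) * hab]
  rw [map_prod, Finset.prod_congr rfl fun i _ => hfactor i,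
    prod_one_add_of_sq_eq_bot hN fun i => Submodule.smul_of_tower_mem N _ (hφx i),
    ← Finset.smul_sum, neg_smul, sub_eq_add_neg]

end FormalIntegral

section Weights

theorem sum_filter_le_sub_of_covBy {S B : Type*} [Fintype S] [LinearOrder S] [AddCommGroup B]
    {η : S} (hη : IsBot η) {f g : S → B} (hfg : ∀ s t, s ⋖ t → g t = f s) (s : S) :
    ∑ t with t ≤ s, (f t - g t) = f s - g η := by
  induction s using WellFoundedLT.induction with
  | ind s ih =>
    rcases (hη s).eq_or_lt with rfl | hlt
    · have hsingle : Finset.univ.filter (· ≤ η) = {η} := by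
        ext t
        simpa using ⟨fun h => h.antisymm (hη t), Eq.le⟩
      rw [hsingle, Finset.sum_singleton]
    · obtain ⟨u, -, hu⟩ := exists_le_covBy_of_lt hlt
      have hinsert : Finset.univ.filter (· ≤ s) = insert s (Finset.univ.filter (· ≤ u)) := by
        ext t
        simp [le_iff_eq_or_lt (b := s), hu.lt_iff_le_left]
      rw [hinsert, Finset.sum_insert (by simp [hu.lt]), ih u hu.lt, hfg u s hu]
      abel

/-- The extensions `α_-`, `α_+` of a weight function `α` on the covers of a linearly ordered set
with least element `η` and greatest element `τ`: the weight of the cover below, respectively above,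
an element, with the conventions `α_-(η) = -1` and `α_+(τ) = 0`. A cover is encoded as a pair, and
the values of `α` on pairs that are not covers are irrelevant. -/
structure IsWeightExtension {S : Type*} [Preorder S] (η τ : S) (α : S × S → ℝ)
    (αm αp : S → ℝ) : Prop where
  isBot : IsBot η
  isTop : IsTop τ
  plus_top : αp τ = 0
  plus_of_covBy : ∀ s t, s ⋖ t → αp s = α (s, t)
  minus_bot : αm η = -1
  minus_of_covBy : ∀ s t, s ⋖ t → αm t = α (s, t)

namespace IsWeightExtension

variable {S : Type*} [Fintype S] [LinearOrder S] {η τ : S} {α : S × S → ℝ} {αm αp : S → ℝ}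

theorem sum_Jf_le (hα : IsWeightExtension η τ α αm αp) (x : A) (s : S) :
    ∑ t with t ≤ s, Jf (αm t) (αp t) x = Jf (-1) (αp s) x := by
  have hglue (s t : S) (hst : s ⋖ t) : Jf 0 (αm t) x = Jf 0 (αp s) x := by
    rw [hα.minus_of_covBy s t hst, hα.plus_of_covBy s t hst]
  rw [Finset.sum_congr rfl fun t _ => Jf_eq_sub (αm t) (αp t) x,
    sum_filter_le_sub_of_covBy hα.isBot hglue, hα.minus_bot, ← Jf_eq_sub]

theorem sum_Jf (hα : IsWeightExtension η τ α αm αp) (x : A) :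
    ∑ t, Jf (αm t) (αp t) x = Jf (-1) 0 x := by
  rw [← hα.plus_top, ← hα.sum_Jf_le x τ, Finset.filter_true_of_mem fun t _ => hα.isTop t]

end IsWeightExtension

end Weights

section KoszulSum

/-- The alternating sum `Σ_{I ≠ ∅} (-1)^|I| Σ_λ F I λ` over all multi-indices of covers, the shape
shared by `c_σ`, the sum defining `chPar`, and their images under algebra homomorphisms. -/
def koszulSum {B : Type*} [Ring B]
    (F : ∀ I : Finset (Fin n), ((i : I) → Sig i.1 × Sig i.1) → B) : B :=
  ∑ I : Finset (Fin n) with I.Nonempty,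
    (-1) ^ I.card * ∑ lam : (i : I) → Sig i.1 × Sig i.1 with ∀ i, (lam i).1 ⋖ (lam i).2, F I lam

variable {B : Type*} [Ring B]

theorem koszulSum_congr {F G : ∀ I : Finset (Fin n), ((i : I) → Sig i.1 × Sig i.1) → B}
    (h : ∀ I, I.Nonempty → ∀ lam, (∀ i, (lam i).1 ⋖ (lam i).2) → F I lam = G I lam) :
    koszulSum F = koszulSum G := by
  refine Finset.sum_congr rfl fun I hI => congrArg _ (Finset.sum_congr rfl fun lam hlam => ?_)
  exact h I (Finset.mem_filter.mp hI).2 lam (Finset.mem_filter.mp hlam).2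

theorem map_koszulSum {C : Type*} [Ring C] (φ : B →+* C)
    (F : ∀ I : Finset (Fin n), ((i : I) → Sig i.1 × Sig i.1) → B) :
    φ (koszulSum F) = koszulSum fun I lam => φ (F I lam) := by
  simp only [koszulSum, map_sum, map_mul, map_pow, map_neg, map_one]

theorem sum_koszulSum_mul {ι : Type*} (s : Finset ι)
    (F : ι → ∀ I : Finset (Fin n), ((i : I) → Sig i.1 × Sig i.1) → B) (w : ι → B) :
    ∑ k ∈ s, koszulSum (F k) * w k = koszulSum fun I lam => ∑ k ∈ s, F k I lam * w k := by
  simp only [koszulSum, Finset.sum_mul, mul_assoc]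
  rw [Finset.sum_comm]
  refine Finset.sum_congr rfl fun I _ => ?_
  rw [← Finset.mul_sum, Finset.sum_comm]

theorem sum_nonempty_eq_sum_singleton {ι M : Type*} [Fintype ι] [AddCommMonoid M]
    {f : Finset ι → M} (hf : ∀ I, 2 ≤ I.card → f I = 0) :
    ∑ I with I.Nonempty, f I = ∑ i, f {i} := by
  rw [← Finset.sum_image (g := fun i : ι => ({i} : Finset ι)) (f := f)
    Finset.singleton_injective.injOn]
  symm
  refine Finset.sum_subset (fun I hI => ?_) fun I hI hsingle => hf I ?_
  · obtain ⟨i, -, rfl⟩ := Finset.mem_image.mp hI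
    simp
  · have hone : I.card ≠ 1 := fun h => by
      obtain ⟨i, rfl⟩ := Finset.card_eq_one.mp h
      exact hsingle (Finset.mem_image_of_mem _ (Finset.mem_univ i))
    have hpos : 0 < I.card := (Finset.mem_filter.mp hI).2.card_pos
    omega

theorem lamOfSingle_covBy {S : Fin n → Type*} [∀ i, Preorder (S i)] {i : Fin n} {p : S i × S i}
    (hp : p.1 ⋖ p.2) (j : ({i} : Finset (Fin n))) :
    (lamOfSingle i p j).1 ⋖ (lamOfSingle i p j).2 := by
  obtain ⟨j, hj⟩ := j
  obtain rfl := Finset.mem_singleton.mp hj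
  exact hp

theorem sum_covers_singleton {M : Type*} [AddCommMonoid M] (i : Fin n)
    (f : ((j : ({i} : Finset (Fin n))) → Sig j.1 × Sig j.1) → M) :
    ∑ lam with ∀ j, (lam j).1 ⋖ (lam j).2, f lam =
      ∑ p : Sig i × Sig i with p.1 ⋖ p.2, f (lamOfSingle i p) := by
  symm
  refine Finset.sum_nbij' (lamOfSingle i) (fun lam => lam ⟨i, Finset.mem_singleton_self i⟩)
    ?_ ?_ ?_ ?_ fun _ _ => rfl
  · intro p hp
    simpa using lamOfSingle_covBy (Finset.mem_filter.mp hp).2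
  · intro lam hlam
    simpa using (Finset.mem_filter.mp hlam).2 ⟨i, _⟩
  · exact fun p _ => rfl
  · rintro lam -
    funext ⟨j, hj⟩
    obtain rfl := Finset.mem_singleton.mp hj
    rfl

theorem koszulSum_eq_neg_sum_singleton
    {F : ∀ I : Finset (Fin n), ((i : I) → Sig i.1 × Sig i.1) → B}
    (hF : ∀ I lam, (∀ i, (lam i).1 ⋖ (lam i).2) → 2 ≤ I.card → F I lam = 0) :
    koszulSum F = -∑ i, ∑ p : Sig i × Sig i with p.1 ⋖ p.2, F {i} (lamOfSingle i p) := by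
  rw [koszulSum, sum_nonempty_eq_sum_singleton, ← Finset.sum_neg_distrib]
  · refine Finset.sum_congr rfl fun i _ => ?_
    rw [Finset.card_singleton, pow_one, neg_one_mul, sum_covers_singleton]
  · intro I hI
    rw [Finset.sum_eq_zero fun lam hlam => hF I lam (Finset.mem_filter.mp hlam).2 hI, mul_zero]

theorem cSigma_eq_add_koszulSum {B : Type*} [CommRing B] (c : B)
    (g : ∀ I : Finset (Fin n), ((i : I) → Sig i.1 × Sig i.1) → B) (σ : ∀ i, Sig i) :
    cSigma c g σ =
      c + koszulSum fun I lam => if ∀ i : I, σ i ≤ (lam i).1 then g I lam else 0 := by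
  simp only [cSigma, koszulSum, forall_and, ← Finset.filter_filter, Finset.sum_filter]

theorem cSigma_bot {B : Type*} [CommRing B] (c : B)
    (g : ∀ I : Finset (Fin n), ((i : I) → Sig i.1 × Sig i.1) → B) {η : ∀ i, Sig i}
    (hη : ∀ i, IsBot (η i)) : cSigma c g η = c + koszulSum g := by
  simp only [cSigma_eq_add_koszulSum, hη _ _, implies_true, if_true]

end KoszulSum

section ClosedForm

/-- The upper limit of integration in direction `i` of the term of index `(I, λ)` in the closed form
of the sum defining `chPar`: the weight `α_i(λ_i)` if `i ∈ I`, and `0` otherwise. -/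
def topWeight (α : ∀ i, Sig i × Sig i → ℝ) (I : Finset (Fin n))
    (lam : (i : I) → Sig i.1 × Sig i.1) (i : Fin n) : ℝ :=
  if h : i ∈ I then α i (lam ⟨i, h⟩) else 0

theorem prod_topWeight_lamOfSingle_add_one {S : Fin n → Type*} (α : ∀ i, S i × S i → ℝ) (i : Fin n)
    (p : S i × S i) : ∏ j, (topWeight α {i} (lamOfSingle i p) j + 1) = α i p + 1 := by
  rw [Fintype.prod_eq_single i fun j hj => ?_]
  · simp [topWeight, lamOfSingle]
  · simp [topWeight, hj]

theorem sum_ite_le_prod {B : Type*} [CommSemiring B] (w : ∀ i, Sig i → B) (I : Finset (Fin n))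
    (s : (i : I) → Sig i.1) (y : B) :
    ∑ σ : ∀ i, Sig i, (if ∀ i : I, σ i ≤ s i then y else 0) * ∏ i, w i (σ i) =
      y * ∏ i, ∑ t with ∀ h : i ∈ I, t ≤ s ⟨i, h⟩, w i t := by
  have hbox : Fintype.piFinset (fun i => {t : Sig i | ∀ h : i ∈ I, t ≤ s ⟨i, h⟩}) =
      ({σ | ∀ i : I, σ i ≤ s i} : Finset (∀ i, Sig i)) := by
    ext σ
    simp
  rw [Finset.prod_univ_sum, hbox, Finset.mul_sum, Finset.sum_filter]
  simp only [ite_mul, zero_mul]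

variable {η τ : ∀ i, Sig i} {α : ∀ i, Sig i × Sig i → ℝ} {αm αp : ∀ i, Sig i → ℝ}

theorem sum_Jf_le_eq_Jf_topWeight (hα : ∀ i, IsWeightExtension (η i) (τ i) (α i) (αm i) (αp i))
    (I : Finset (Fin n)) {lam : (i : I) → Sig i.1 × Sig i.1}
    (hlam : ∀ i, (lam i).1 ⋖ (lam i).2) (i : Fin n) (x : A) :
    ∑ t with ∀ h : i ∈ I, t ≤ (lam ⟨i, h⟩).1, Jf (αm i t) (αp i t) x =
      Jf (-1) (topWeight α I lam i) x := by
  by_cases hi : i ∈ I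
  · simp only [hi, forall_true_left, topWeight, dif_pos]
    rw [(hα i).sum_Jf_le, (hα i).plus_of_covBy _ _ (hlam ⟨i, hi⟩)]
  · simp only [hi, IsEmpty.forall_iff, topWeight, dif_neg, not_false_eq_true, Finset.filter_true]
    exact (hα i).sum_Jf x

theorem sum_cSigma_mul_prod_Jf (hα : ∀ i, IsWeightExtension (η i) (τ i) (α i) (αm i) (αp i))
    (D : Fin n → A) (c : A) (g : ∀ I : Finset (Fin n), ((i : I) → Sig i.1 × Sig i.1) → A) :
    ∑ σ : ∀ i, Sig i, cSigma c g σ * ∏ i, Jf (αm i (σ i)) (αp i (σ i)) (D i) =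
      c * ∏ i, Jf (-1) 0 (D i) +
        koszulSum fun I lam => g I lam * ∏ i, Jf (-1) (topWeight α I lam i) (D i) := by
  simp only [cSigma_eq_add_koszulSum, add_mul, Finset.sum_add_distrib]
  congr 1
  · rw [← Finset.mul_sum, ← Fintype.prod_sum fun i t => Jf (αm i t) (αp i t) (D i),
      Finset.prod_congr rfl fun i _ => (hα i).sum_Jf (D i)]
  · rw [sum_koszulSum_mul]
    refine koszulSum_congr fun I _ lam hlam => ?_
    rw [sum_ite_le_prod (fun i t => Jf (αm i t) (αp i t) (D i)) I (fun i => (lam i).1),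
      Finset.prod_congr rfl fun i _ => sum_Jf_le_eq_Jf_topWeight hα I hlam i (D i)]

theorem prod_Jf_mul_chPar {D : Fin n → A} (hD : ∀ i, IsNilpotent (D i)) (αm αp : ∀ i, Sig i → ℝ)
    (c : A) (g : ∀ I : Finset (Fin n), ((i : I) → Sig i.1 × Sig i.1) → A) :
    (∏ i, Jf 0 1 (D i)) * chPar D αm αp c g =
      ∑ σ : ∀ i, Sig i, cSigma c g σ * ∏ i, Jf (αm i (σ i)) (αp i (σ i)) (D i) :=
  Ring.mul_inverse_cancel_left _ _ <| IsUnit.prod_univ_iff.mpr fun i => isUnit_Jf zero_ne_one (hD i)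

end ClosedForm

section FirstOrder

variable {B : Type*} [CommRing B] [Algebra ℝ B] {N : Ideal B} {φ : A →ₐ[ℝ] B} {D : Fin n → A}
  {g hh : ∀ I : Finset (Fin n), ((i : I) → Sig i.1 × Sig i.1) → A}

theorem map_eq_map_of_eq_prod_Jf_mul (hN : N ^ 2 = ⊥) (hD : ∀ i, IsNilpotent (D i))
    (hφD : ∀ i, φ (D i) ∈ N) {I : Finset (Fin n)} {y z : A}
    (hGRR : y = (∏ i : I, Jf 0 1 (D i.1)) * z) (hz : φ z ∈ N) :
    φ y = φ z := by
  rw [hGRR, map_mul, map_prod, mul_comm,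
    mul_prod_eq_prod_smul fun i : I => mul_map_Jf hN φ (hD i) (hφD i) 0 1 hz]
  simp

theorem map_koszulSum_of_smul {F : ∀ I : Finset (Fin n), ((i : I) → Sig i.1 × Sig i.1) → A}
    {w : ∀ I : Finset (Fin n), ((i : I) → Sig i.1 × Sig i.1) → ℝ}
    (hF : ∀ I, I.Nonempty → ∀ lam, (∀ i, (lam i).1 ⋖ (lam i).2) →
      φ (F I lam) = w I lam • φ (hh I lam))
    (hbig : ∀ I lam, (∀ i, (lam i).1 ⋖ (lam i).2) → 2 ≤ I.card → φ (hh I lam) = 0) :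
    φ (koszulSum F) = -∑ i, ∑ p : Sig i × Sig i with p.1 ⋖ p.2,
      w {i} (lamOfSingle i p) • φ (hh {i} (lamOfSingle i p)) := by
  have hterms : φ (koszulSum F) = koszulSum fun I lam => w I lam • φ (hh I lam) :=
    (map_koszulSum φ.toRingHom F).trans (koszulSum_congr hF)
  rw [hterms, koszulSum_eq_neg_sum_singleton fun I lam hlam hI => ?_]
  rw [hbig I lam hlam hI, smul_zero]

variable (hN : N ^ 2 = ⊥) (hD : ∀ i, IsNilpotent (D i)) (hφD : ∀ i, φ (D i) ∈ N)
  (hGRR : ∀ I : Finset (Fin n), I.Nonempty → ∀ lam : (i : I) → Sig i.1 × Sig i.1,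
    (∀ i, (lam i).1 ⋖ (lam i).2) → g I lam = (∏ i : I, Jf 0 1 (D i.1)) * hh I lam)
  (hφh : ∀ I : Finset (Fin n), I.Nonempty → ∀ lam : (i : I) → Sig i.1 × Sig i.1,
    (∀ i, (lam i).1 ⋖ (lam i).2) → φ (hh I lam) ∈ N)
  (hbig : ∀ (I : Finset (Fin n)) (lam : (i : I) → Sig i.1 × Sig i.1),
    (∀ i, (lam i).1 ⋖ (lam i).2) → 2 ≤ I.card → φ (hh I lam) = 0)
  {η τ : ∀ i, Sig i} {α : ∀ i, Sig i × Sig i → ℝ} {αm αp : ∀ i, Sig i → ℝ} {c : A}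
include hN hD hφD hGRR hφh hbig

theorem map_cSigma_bot (hη : ∀ i, IsBot (η i)) :
    φ (cSigma c g η) =
      φ c - ∑ i, ∑ p : Sig i × Sig i with p.1 ⋖ p.2, φ (hh {i} (lamOfSingle i p)) := by
  have hterm (I : Finset (Fin n)) (hI : I.Nonempty) (lam : (i : I) → Sig i.1 × Sig i.1)
      (hlam : ∀ i, (lam i).1 ⋖ (lam i).2) : φ (g I lam) = (1 : ℝ) • φ (hh I lam) := by
    rw [one_smul, map_eq_map_of_eq_prod_Jf_mul hN hD hφD (hGRR I hI lam hlam) (hφh I hI lam hlam)]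
  rw [cSigma_bot c g hη, map_add, map_koszulSum_of_smul hterm hbig, ← sub_eq_add_neg]
  simp only [one_smul]

theorem mul_sum_map_of_twist (hη : ∀ i, IsBot (η i))
    (htwist : cSigma c g η * nexp (∑ i, D i) = c) :
    φ c * ∑ i, φ (D i) =
      ∑ i, ∑ p : Sig i × Sig i with p.1 ⋖ p.2, φ (hh {i} (lamOfSingle i p)) := by
  set E := ∑ i, φ (D i)
  set S := ∑ i, ∑ p : Sig i × Sig i with p.1 ⋖ p.2, φ (hh {i} (lamOfSingle i p))
  have hE_mem : E ∈ N := N.sum_mem fun i _ => hφD i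
  have hS_mem : S ∈ N := N.sum_mem fun i _ => N.sum_mem fun p hp =>
    hφh {i} (Finset.singleton_nonempty i) _ (lamOfSingle_covBy (Finset.mem_filter.mp hp).2)
  have hSE : S * E = 0 := mul_eq_zero_of_mem_of_sq_eq_bot hN hS_mem hE_mem
  have hexp : φ (nexp (∑ i, D i)) = 1 + E := by
    have hEE : E * E = 0 := mul_eq_zero_of_mem_of_sq_eq_bot hN hE_mem hE_mem
    rw [map_nexp φ (isNilpotent_sum fun i _ => hD i) (by rw [map_sum, sq, hEE]), map_sum]
  have hfirst := congrArg φ htwist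
  rw [map_mul, map_cSigma_bot hN hD hφD hGRR hφh hbig hη, hexp] at hfirst
  linear_combination hfirst + hSE

theorem map_sum_cSigma_mul_prod_Jf
    (hα : ∀ i, IsWeightExtension (η i) (τ i) (α i) (αm i) (αp i)) :
    φ (∑ σ : ∀ i, Sig i, cSigma c g σ * ∏ i, Jf (αm i (σ i)) (αp i (σ i)) (D i)) =
      φ c * (1 + (1 / 2 : ℝ) • ∑ i, φ (D i)) -
        ∑ i, ∑ p : Sig i × Sig i with p.1 ⋖ p.2,
          (α i p + 1) • φ (hh {i} (lamOfSingle i p)) := by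
  have hterm (I : Finset (Fin n)) (hI : I.Nonempty) (lam : (i : I) → Sig i.1 × Sig i.1)
      (hlam : ∀ i, (lam i).1 ⋖ (lam i).2) :
      φ (g I lam * ∏ i, Jf (-1) (topWeight α I lam i) (D i)) =
        (∏ i, (topWeight α I lam i + 1)) • φ (hh I lam) := by
    have hmem := hφh I hI lam hlam
    rw [map_mul, map_eq_map_of_eq_prod_Jf_mul hN hD hφD (hGRR I hI lam hlam) hmem, map_prod,
      mul_prod_eq_prod_smul fun i => mul_map_Jf hN φ (hD i) (hφD i) _ _ hmem]
    simp only [sub_neg_eq_add]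
  rw [sum_cSigma_mul_prod_Jf hα, map_add, map_mul,
    map_prod_Jf_of_sub_eq_one hN φ hD hφD (by norm_num : (0 : ℝ) - -1 = 1),
    map_koszulSum_of_smul hterm hbig, ← sub_eq_add_neg]
  simp only [prod_topWeight_lamOfSingle_add_one]
  congr 2
  module

theorem map_chPar_of_sq_eq_bot (hα : ∀ i, IsWeightExtension (η i) (τ i) (α i) (αm i) (αp i))
    (htwist : cSigma c g η * nexp (∑ i, D i) = c) :
    φ (chPar D αm αp c g) =
      φ c - ∑ i, ∑ p : Sig i × Sig i with p.1 ⋖ p.2, α i p • φ (hh {i} (lamOfSingle i p)) := by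
  have hφ := congrArg φ (prod_Jf_mul_chPar hD αm αp c g)
  rw [map_mul, map_prod_Jf_of_sub_eq_one hN φ hD hφD (sub_zero 1),
    map_sum_cSigma_mul_prod_Jf hN hD hφD hGRR hφh hbig hα] at hφ
  have htw := mul_sum_map_of_twist hN hD hφD hGRR hφh hbig (fun i => (hα i).isBot) htwist
  simp only [add_smul, one_smul, Finset.sum_add_distrib, zero_add] at hφ
  set S := ∑ i, ∑ p : Sig i × Sig i with p.1 ⋖ p.2, φ (hh {i} (lamOfSingle i p))
  set T := ∑ i, ∑ p : Sig i × Sig i with p.1 ⋖ p.2, α i p • φ (hh {i} (lamOfSingle i p))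
  have hφh_single (i : Fin n) (p : Sig i × Sig i) (hp : p ∈ Finset.univ.filter fun p => p.1 ⋖ p.2) :
      φ (hh {i} (lamOfSingle i p)) ∈ N :=
    hφh {i} (Finset.singleton_nonempty i) _ (lamOfSingle_covBy (Finset.mem_filter.mp hp).2)
  have hS : S ∈ N := N.sum_mem fun i _ => N.sum_mem fun p hp => hφh_single i p hp
  have hT : T ∈ N := N.sum_mem fun i _ => N.sum_mem fun p hp =>
    Submodule.smul_of_tower_mem N _ (hφh_single i p hp)
  have hE : ∑ i, φ (D i) ∈ N := N.sum_mem fun i _ => hφD i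
  set F := (1 / 2 : ℝ) • ∑ i, φ (D i) with hF_def
  have hF : F ∈ N := Submodule.smul_of_tower_mem N _ hE
  have hE_eq : ∑ i, φ (D i) = F + F := by rw [hF_def]; module
  rw [hE_eq] at htw
  -- `1 + F` is the inverse of `1 - F`, the image of `∏ J(0, 1, D_i)`.
  linear_combination (1 + F) * hφ + htw
    + (φ (chPar D αm αp c g) + φ c) * mul_eq_zero_of_mem_of_sq_eq_bot hN hF hF
    - mul_eq_zero_of_mem_of_sq_eq_bot hN hT hF - mul_eq_zero_of_mem_of_sq_eq_bot hN hS hF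

end FirstOrder

section Grading

variable {R B : Type*} [CommSemiring R] [CommRing B] [Algebra R B] (𝒜 : ℕ → Submodule R B)
  [GradedAlgebra 𝒜]

/-- Truncation of a graded algebra modulo degree at least two, `x ↦ x₀ + x₁ ε`. The target is the
ring of dual numbers over the whole algebra, which avoids making `𝒜 1` a module over `𝒜 0`. -/
def firstOrderHom : B →ₐ[R] TrivSqZeroExt B B :=
  AlgHom.ofLinearMap
    ((TrivSqZeroExt.inlAlgHom R B B).toLinearMap ∘ₗ GradedAlgebra.proj 𝒜 0 +
      (TrivSqZeroExt.inrHom B B).restrictScalars R ∘ₗ GradedAlgebra.proj 𝒜 1)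
    (by
      have hone : (1 : B) ∈ 𝒜 0 := SetLike.GradedOne.one_mem
      ext
      · simp [-DirectSum.decompose_one, DirectSum.decompose_of_mem_same 𝒜 hone]
      · simp [-DirectSum.decompose_one, DirectSum.decompose_of_mem_ne 𝒜 hone zero_ne_one])
    (by
      intro x y
      ext
      · simp [DirectSum.decompose_mul, DirectSum.coe_mul_apply_eq_sum_antidiagonal,
          Finset.Nat.antidiagonal_succ]
      · simp [DirectSum.decompose_mul, DirectSum.coe_mul_apply_eq_sum_antidiagonal,
          Finset.Nat.antidiagonal_succ, mul_comm])

@[simp]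
theorem fst_firstOrderHom (x : B) :
    (firstOrderHom 𝒜 x).fst = (DirectSum.decompose 𝒜 x 0 : B) := by
  simp [firstOrderHom]

@[simp]
theorem snd_firstOrderHom (x : B) :
    (firstOrderHom 𝒜 x).snd = (DirectSum.decompose 𝒜 x 1 : B) := by
  simp [firstOrderHom]

theorem firstOrderHom_mem_kerIdeal {x : B} (hx : (DirectSum.decompose 𝒜 x 0 : B) = 0) :
    firstOrderHom 𝒜 x ∈ TrivSqZeroExt.kerIdeal B B := by
  rwa [TrivSqZeroExt.kerIdeal, RingHom.mem_ker, TrivSqZeroExt.fstHom_apply, fst_firstOrderHom]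

theorem firstOrderHom_eq_zero {x : B} (h0 : (DirectSum.decompose 𝒜 x 0 : B) = 0)
    (h1 : (DirectSum.decompose 𝒜 x 1 : B) = 0) : firstOrderHom 𝒜 x = 0 := by
  ext <;> simp [h0, h1]

end Grading

theorem chPar_deg0_deg1_general
    {D : Fin n → A} (hD : ∀ i, IsNilpotent (D i))
    {η τ : ∀ i, Sig i} {α : ∀ i, Sig i × Sig i → ℝ} {αm αp : ∀ i, Sig i → ℝ}
    (hα : ∀ i, IsWeightExtension (η i) (τ i) (α i) (αm i) (αp i))
    {c : A} {g hh : ∀ I : Finset (Fin n), ((i : I) → Sig i.1 × Sig i.1) → A}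
    (hGRR : ∀ I : Finset (Fin n), I.Nonempty → ∀ lam : (i : I) → Sig i.1 × Sig i.1,
      (∀ i, (lam i).1 ⋖ (lam i).2) → g I lam = (∏ i : I, Jf 0 1 (D i.1)) * hh I lam)
    (htwist : cSigma c g η * nexp (∑ i, D i) = c)
    (𝒜 : ℕ → Submodule ℝ A) [GradedAlgebra 𝒜]
    (hD0 : ∀ i, (DirectSum.decompose 𝒜 (D i) 0 : A) = 0)
    (hhlow : ∀ (I : Finset (Fin n)) (lam : (i : I) → Sig i.1 × Sig i.1),
      (∀ i, (lam i).1 ⋖ (lam i).2) → ∀ m, m < I.card →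
        (DirectSum.decompose 𝒜 (hh I lam) m : A) = 0) :
    (DirectSum.decompose 𝒜 (chPar D αm αp c g) 0 : A) = (DirectSum.decompose 𝒜 c 0 : A) ∧
      (DirectSum.decompose 𝒜 (chPar D αm αp c g) 1 : A) =
        (DirectSum.decompose 𝒜 c 1 : A) -
          ∑ i, ∑ p : Sig i × Sig i with p.1 ⋖ p.2,
            α i p • (DirectSum.decompose 𝒜 (hh {i} (lamOfSingle i p)) 1 : A) := by
  have hfirst := map_chPar_of_sq_eq_bot (φ := firstOrderHom 𝒜) (TrivSqZeroExt.kerIdeal_sq A A) hD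
    (fun i => firstOrderHom_mem_kerIdeal 𝒜 (hD0 i)) hGRR
    (fun I hI lam hlam => firstOrderHom_mem_kerIdeal 𝒜 (hhlow I lam hlam 0 hI.card_pos))
    (fun I lam hlam hI => firstOrderHom_eq_zero 𝒜 (hhlow I lam hlam 0 (by omega))
      (hhlow I lam hlam 1 (by omega)))
    hα htwist
  have hdeg0 : ∑ i, ∑ p : Sig i × Sig i with p.1 ⋖ p.2,
      α i p • (DirectSum.decompose 𝒜 (hh {i} (lamOfSingle i p)) 0 : A) = 0 :=
    Finset.sum_eq_zero fun i _ => Finset.sum_eq_zero fun p hp => by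
      rw [hhlow {i} _ (lamOfSingle_covBy (Finset.mem_filter.mp hp).2) 0 (by simp), smul_zero]
  constructor
  · simpa only [TrivSqZeroExt.fst_sub, TrivSqZeroExt.fst_sum, TrivSqZeroExt.fst_smul,
      fst_firstOrderHom, hdeg0, sub_zero] using congrArg TrivSqZeroExt.fst hfirst
  · simpa only [TrivSqZeroExt.snd_sub, TrivSqZeroExt.snd_sum, TrivSqZeroExt.snd_smul,
      snd_firstOrderHom] using congrArg TrivSqZeroExt.snd hfirst

/-- Degree `0` and `1` parts of the parabolic Chern character:
`ch_0^{Par}(E) = rank(E)·[X]` and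
`ch_1^{Par}(E) = ch_1^{Vb}(E) - Σ_i Σ_{λ ∈ Σ'_i} α_i(λ) rank(Gr^i_λ) [D_i]`. -/
theorem chPar_deg0_deg1
    {A : Type*} [CommRing A] [Algebra ℝ A]
    {n : ℕ} (hn : 1 ≤ n)
    {Sig : Fin n → Type*} [∀ i, Fintype (Sig i)] [∀ i, LinearOrder (Sig i)]
    [∀ i, Nontrivial (Sig i)]
    (D : Fin n → A) (hD : ∀ i, IsNilpotent (D i))
    (η τ : ∀ i, Sig i) (hη : ∀ i σ, η i ≤ σ) (hτ : ∀ i σ, σ ≤ τ i)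
    (α : ∀ i, Sig i × Sig i → ℝ)
    (hα : ∀ i p, p.1 ⋖ p.2 → α i p ∈ Set.Ioc (-1 : ℝ) 0)
    (hαmono : ∀ i (p p' : Sig i × Sig i),
        p.1 ⋖ p.2 → p'.1 ⋖ p'.2 → p.1 ≤ p'.1 → α i p ≤ α i p')
    (αp αm : ∀ i, Sig i → ℝ)
    (hαpτ : ∀ i, αp i (τ i) = 0)
    (hαpc : ∀ i (σ σ' : Sig i), σ ⋖ σ' → αp i σ = α i (σ, σ'))
    (hαmη : ∀ i, αm i (η i) = -1)
    (hαmc : ∀ i (σ σ' : Sig i), σ ⋖ σ' → αm i σ' = α i (σ, σ'))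
    (c : A)
    (g hh : ∀ I : Finset (Fin n), ((i : I) → Sig i.1 × Sig i.1) → A)
    (hGRR : ∀ (I : Finset (Fin n)), I.Nonempty →
        ∀ lam : (i : I) → Sig i.1 × Sig i.1, (∀ i : I, (lam i).1 ⋖ (lam i).2) →
          g I lam = (∏ i : I, Jf 0 1 (D i.1)) * hh I lam)
    (htwist : cSigma c g (fun i => η i) * nexp (∑ i, D i) = c)
    (𝒜 : ℕ → Submodule ℝ A) [GradedAlgebra 𝒜]
    (hD1 : ∀ i, D i ∈ 𝒜 1)
    (hhlow : ∀ (I : Finset (Fin n)) (lam : (i : I) → Sig i.1 × Sig i.1),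
        (∀ i : I, (lam i).1 ⋖ (lam i).2) → ∀ m, m < I.card →
          (DirectSum.decompose 𝒜 (hh I lam) m : A) = 0)
    (r : ∀ i, Sig i × Sig i → ℚ)
    (hr0 : ∀ i (p : Sig i × Sig i), p.1 ⋖ p.2 → 0 ≤ r i p)
    (hr1 : ∀ i (p : Sig i × Sig i), p.1 ⋖ p.2 →
        (DirectSum.decompose 𝒜 (hh {i} (lamOfSingle i p)) 1 : A) = (r i p : ℝ) • D i) :
    (DirectSum.decompose 𝒜 (chPar D αm αp c g) 0 : A) =
        (DirectSum.decompose 𝒜 c 0 : A) ∧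
      (DirectSum.decompose 𝒜 (chPar D αm αp c g) 1 : A) =
        (DirectSum.decompose 𝒜 c 1 : A) -
          ∑ i, ∑ p ∈ Finset.univ.filter (fun p : Sig i × Sig i => p.1 ⋖ p.2),
            (α i p * (r i p : ℝ)) • D i := by
  obtain ⟨hdeg0, hdeg1⟩ := chPar_deg0_deg1_general hD
    (fun i => ⟨hη i, hτ i, hαpτ i, hαpc i, hαmη i, hαmc i⟩) hGRR htwist 𝒜
    (fun i => DirectSum.decompose_of_mem_ne 𝒜 (hD1 i) one_ne_zero) hhlow
  refine ⟨hdeg0, hdeg1.trans (congrArg _ ?_)⟩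
  refine Finset.sum_congr rfl fun i _ => Finset.sum_congr rfl fun p hp => ?_
  rw [hr1 i p (Finset.mem_filter.mp hp).2, smul_smul]
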